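/- Let M ∈ ℝ^{n×n} be a fixed matrix and let r be a uniformly random unit vector in ℝ^n. If Pr[‖Mr‖² ≤ a] ≥ 9/10, then ‖M‖_F² ≤ C·n·a for some universal constant C. -/

import Mathlib

open MeasureTheory

/-- The uniform probability measure on the unit sphere of `ℝⁿ` (Euclidean norm),
obtained by normalizing the spherical part of Lebesgue measure. -/
noncomputable def sphereUniform (n : ℕ) :
    Measure (Metric.sphere (0 : EuclideanSpace ℝ (Fin n)) 1) :=
  (((volume : Measure (EuclideanSpace ℝ (Fin n))).toSphere Set.univ)⁻¹ : ENNReal) •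
    (volume : Measure (EuclideanSpace ℝ (Fin n))).toSphere

/-!
For a rotation-invariant law of `x` in dimension `d`, the moment `E ⟪u, x⟫ ^ k` depends only on
`‖u‖`. Polarizing `E ⟪u, x⟫ ^ 4` and tracing over an orthonormal basis then gives
`d (d + 2) E [⟪u, x⟫² ⟪v, x⟫²] = (‖u‖² ‖v‖² + 2 ⟪u, v⟫²) E ‖x‖⁴`, as for Gaussian vectors. Hence on
the unit sphere `Q = ‖M x‖²` has mean `‖M‖_F² / d` and second moment at most three times the squared
mean, and the Paley–Zygmund inequality prevents `Q` from being much smaller than its mean with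
probability close to one.
-/

open Module Set
open scoped RealInnerProductSpace Pointwise

section SecondMoment

variable {Ω : Type*} [MeasurableSpace Ω] {μ : Measure Ω} {f : Ω → ℝ}

theorem setIntegral_le_sqrt_integral_sq_mul_sqrt_measureReal (hf : MemLp f 2 μ) {s : Set Ω}
    (hs : μ s ≠ ⊤) : ∫ x in s, f x ∂μ ≤ √(∫ x, f x ^ 2 ∂μ) * √(μ.real s) := by
  have : Fact (μ s < ⊤) := ⟨hs.lt_top⟩
  have hfs : MemLp f (ENNReal.ofReal 2) (μ.restrict s) := by simpa using hf.restrict s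
  have hone : MemLp (fun _ ↦ (1 : ℝ)) (ENNReal.ofReal 2) (μ.restrict s) := memLp_const 1
  have hölder := integral_mul_norm_le_Lp_mul_Lq Real.HolderConjugate.two_two hfs hone
  simp only [Real.norm_eq_abs, abs_one, mul_one, Real.rpow_two, sq_abs, one_pow,
    ← Real.sqrt_eq_rpow, integral_const, measureReal_restrict_apply_univ, smul_eq_mul] at hölder
  calc ∫ x in s, f x ∂μ ≤ ∫ x in s, |f x| ∂μ :=
        (le_abs_self _).trans abs_integral_le_integral_abs
    _ ≤ √(∫ x in s, f x ^ 2 ∂μ) * √(μ.real s) := hölder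
    _ ≤ √(∫ x, f x ^ 2 ∂μ) * √(μ.real s) := by
        gcongr
        exacts [ae_of_all _ fun x ↦ sq_nonneg (f x), hf.integrable_sq, Measure.restrict_le_self]

theorem paleyZygmund_integral_le [IsProbabilityMeasure μ] (hf : MemLp f 2 μ) {a : ℝ} (ha : 0 ≤ a) :
    ∫ x, f x ∂μ ≤ a + √(∫ x, f x ^ 2 ∂μ) * √(μ.real {x | a < f x}) := by
  have hs : NullMeasurableSet {x | a < f x} μ :=
    nullMeasurableSet_lt aemeasurable_const hf.aemeasurable
  have hfi : Integrable f μ := hf.integrable one_le_two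
  have hbody : ∫ x in {x | a < f x}ᶜ, f x ∂μ ≤ a :=
    calc ∫ x in {x | a < f x}ᶜ, f x ∂μ ≤ ∫ _ in {x | a < f x}ᶜ, a ∂μ :=
          setIntegral_mono_on₀ hfi.integrableOn integrableOn_const hs.compl fun _ hx ↦ not_lt.1 hx
      _ = μ.real {x | a < f x}ᶜ * a := by rw [setIntegral_const, smul_eq_mul]
      _ ≤ a := mul_le_of_le_one_left ha measureReal_le_one
  have htail := setIntegral_le_sqrt_integral_sq_mul_sqrt_measureReal hf
    (measure_ne_top μ {x | a < f x})
  rw [← integral_add_compl₀ hs hfi]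
  linarith

end SecondMoment

section UnitNorm

variable {E : Type*} [NormedAddCommGroup E] [MeasurableSpace E] {μ : Measure E}

theorem integrable_norm_pow_of_ae_norm_eq_one [IsFiniteMeasure μ] (hone : ∀ᵐ x ∂μ, ‖x‖ = 1)
    (k : ℕ) : Integrable (fun x ↦ ‖x‖ ^ k) μ :=
  (integrable_const (1 : ℝ)).congr (hone.mono fun x hx ↦ by simp [hx])

theorem integral_norm_pow_of_ae_norm_eq_one [IsProbabilityMeasure μ] (hone : ∀ᵐ x ∂μ, ‖x‖ = 1)
    (k : ℕ) : ∫ x, ‖x‖ ^ k ∂μ = 1 := by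
  rw [integral_congr_ae (g := fun _ ↦ 1) (hone.mono fun x hx ↦ by simp [hx])]
  simp

end UnitNorm

theorem norm_add_pow_four_add_norm_sub_pow_four {E : Type*} [NormedAddCommGroup E]
    [InnerProductSpace ℝ E] (u v : E) :
    ‖u + v‖ ^ 4 + ‖u - v‖ ^ 4 =
      2 * ‖u‖ ^ 4 + 2 * ‖v‖ ^ 4 + 4 * (‖u‖ ^ 2 * ‖v‖ ^ 2 + 2 * ⟪u, v⟫ ^ 2) := by
  calc ‖u + v‖ ^ 4 + ‖u - v‖ ^ 4 = (‖u + v‖ ^ 2) ^ 2 + (‖u - v‖ ^ 2) ^ 2 := by ring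
    _ = _ := by rw [norm_add_sq_real, norm_sub_sq_real]; ring

section RotationInvariance

variable {E : Type*} [NormedAddCommGroup E] [InnerProductSpace ℝ E] [MeasurableSpace E]

/-- A measure on an inner product space is rotation invariant if every linear isometric
automorphism preserves it. Reflections are included, so the group acts transitively on spheres in
every dimension. -/
def IsRotationInvariant (μ : Measure E) : Prop :=
  ∀ U : E ≃ₗᵢ[ℝ] E, MeasurePreserving U μ μ

variable {μ : Measure E}

theorem IsRotationInvariant.smul (hμ : IsRotationInvariant μ) (c : ENNReal) :
    IsRotationInvariant (c • μ) :=
  fun U ↦ (hμ U).smul_measure c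

variable [BorelSpace E]

theorem integrable_inner_pow_mul_inner_pow [SecondCountableTopology E] {j k : ℕ}
    (hjk : Integrable (fun x ↦ ‖x‖ ^ (j + k)) μ) (u v : E) :
    Integrable (fun x ↦ ⟪u, x⟫ ^ j * ⟪v, x⟫ ^ k) μ := by
  refine (hjk.const_mul (‖u‖ ^ j * ‖v‖ ^ k)).mono'
    (Continuous.aestronglyMeasurable (by fun_prop)) (ae_of_all _ fun x ↦ ?_)
  calc ‖⟪u, x⟫ ^ j * ⟪v, x⟫ ^ k‖ = ‖⟪u, x⟫‖ ^ j * ‖⟪v, x⟫‖ ^ k := by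
        rw [norm_mul, norm_pow, norm_pow]
    _ ≤ (‖u‖ * ‖x‖) ^ j * (‖v‖ * ‖x‖) ^ k := by gcongr <;> exact norm_inner_le_norm _ _
    _ = ‖u‖ ^ j * ‖v‖ ^ k * ‖x‖ ^ (j + k) := by ring

theorem integrable_inner_pow [SecondCountableTopology E] {k : ℕ}
    (hk : Integrable (fun x ↦ ‖x‖ ^ k) μ) (u : E) : Integrable (fun x ↦ ⟪u, x⟫ ^ k) μ := by
  simpa using integrable_inner_pow_mul_inner_pow (j := k) (k := 0) hk u 0

theorem memLp_two_sum_inner_sq [SecondCountableTopology E] (h4 : Integrable (fun x ↦ ‖x‖ ^ 4) μ)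
    {ι : Type*} [Fintype ι] (w : ι → E) : MemLp (fun x ↦ ∑ i, ⟪w i, x⟫ ^ 2) 2 μ := by
  refine memLp_finsetSum _ fun i _ ↦
    (memLp_two_iff_integrable_sq (Continuous.aestronglyMeasurable (by fun_prop))).2 ?_
  simpa only [← pow_mul] using integrable_inner_pow h4 (w i)

theorem integral_inner_add_pow_four_add_integral_inner_sub_pow_four [SecondCountableTopology E]
    (h4 : Integrable (fun x ↦ ‖x‖ ^ 4) μ) (u v : E) :
    ∫ x, ⟪u + v, x⟫ ^ 4 ∂μ + ∫ x, ⟪u - v, x⟫ ^ 4 ∂μ =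
      2 * ∫ x, ⟪u, x⟫ ^ 4 ∂μ + 2 * ∫ x, ⟪v, x⟫ ^ 4 ∂μ
        + 12 * ∫ x, ⟪u, x⟫ ^ 2 * ⟪v, x⟫ ^ 2 ∂μ := by
  have hpow (w : E) := integrable_inner_pow h4 w
  have hmul := integrable_inner_pow_mul_inner_pow (j := 2) (k := 2) h4 u v
  calc ∫ x, ⟪u + v, x⟫ ^ 4 ∂μ + ∫ x, ⟪u - v, x⟫ ^ 4 ∂μ
      = ∫ x, ⟪u + v, x⟫ ^ 4 + ⟪u - v, x⟫ ^ 4 ∂μ := (integral_add (hpow _) (hpow _)).symm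
    _ = ∫ x, 2 * ⟪u, x⟫ ^ 4 + 2 * ⟪v, x⟫ ^ 4 + 12 * (⟪u, x⟫ ^ 2 * ⟪v, x⟫ ^ 2) ∂μ := by
        congr with x
        rw [inner_add_left, inner_sub_left]
        ring
    _ = _ := by
        rw [integral_add (by fun_prop) (by fun_prop), integral_add (by fun_prop) (by fun_prop)]
        simp only [integral_const_mul]

namespace IsRotationInvariant

theorem integral_comp_inner_eq {F : Type*} [NormedAddCommGroup F] [NormedSpace ℝ F]
    (hμ : IsRotationInvariant μ) (f : ℝ → F) {u v : E} (huv : ‖u‖ = ‖v‖) :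
    ∫ x, f ⟪u, x⟫ ∂μ = ∫ x, f ⟪v, x⟫ ∂μ := by
  let R := (ℝ ∙ (u - v))ᗮ.reflection
  have hR : R u = v := Submodule.reflection_sub huv
  rw [← hR, ← (hμ R).integral_comp R.toHomeomorph.measurableEmbedding fun x ↦ f ⟪R u, x⟫]
  simp only [LinearIsometryEquiv.inner_map_map]

theorem exists_integral_inner_pow_eq (hμ : IsRotationInvariant μ) (k : ℕ) :
    ∃ c : ℝ, ∀ u : E, ∫ x, ⟪u, x⟫ ^ k ∂μ = c * ‖u‖ ^ k := by
  rcases subsingleton_or_nontrivial E with _ | _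
  · refine ⟨∫ x, ⟪(0 : E), x⟫ ^ k ∂μ, fun u ↦ ?_⟩
    rcases eq_or_ne k 0 with rfl | hk
    · simp
    · simp [Subsingleton.elim u 0, hk]
  · obtain ⟨e, he⟩ := exists_norm_eq E zero_le_one
    refine ⟨∫ x, ⟪e, x⟫ ^ k ∂μ, fun u ↦ ?_⟩
    rw [hμ.integral_comp_inner_eq (· ^ k) (v := ‖u‖ • e) (by simp [norm_smul, he])]
    simp only [real_inner_smul_left, mul_pow, integral_const_mul]
    exact mul_comm _ _

variable [FiniteDimensional ℝ E]

theorem finrank_mul_integral_inner_sq (hμ : IsRotationInvariant μ)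
    (h2 : Integrable (fun x ↦ ‖x‖ ^ 2) μ) (u : E) :
    finrank ℝ E * ∫ x, ⟪u, x⟫ ^ 2 ∂μ = ‖u‖ ^ 2 * ∫ x, ‖x‖ ^ 2 ∂μ := by
  obtain ⟨c, hc⟩ := hμ.exists_integral_inner_pow_eq 2
  let b := stdOrthonormalBasis ℝ E
  have htrace : ∫ x, ‖x‖ ^ 2 ∂μ = finrank ℝ E * c :=
    calc ∫ x, ‖x‖ ^ 2 ∂μ = ∫ x, ∑ i, ⟪b i, x⟫ ^ 2 ∂μ := by simp only [b.sum_sq_inner_right]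
      _ = ∑ i, ∫ x, ⟪b i, x⟫ ^ 2 ∂μ := integral_finsetSum _ fun i _ ↦ integrable_inner_pow h2 _
      _ = finrank ℝ E * c := by simp [hc]
  rw [hc, htrace]
  ring

theorem finrank_mul_integral_inner_sq_mul_inner_sq (hμ : IsRotationInvariant μ)
    (h4 : Integrable (fun x ↦ ‖x‖ ^ 4) μ) (u v : E) :
    finrank ℝ E * (finrank ℝ E + 2) * ∫ x, ⟪u, x⟫ ^ 2 * ⟪v, x⟫ ^ 2 ∂μ =
      (‖u‖ ^ 2 * ‖v‖ ^ 2 + 2 * ⟪u, v⟫ ^ 2) * ∫ x, ‖x‖ ^ 4 ∂μ := by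
  obtain ⟨c, hc⟩ := hμ.exists_integral_inner_pow_eq 4
  have hpolar (u v : E) : ∫ x, ⟪u, x⟫ ^ 2 * ⟪v, x⟫ ^ 2 ∂μ =
      c / 3 * (‖u‖ ^ 2 * ‖v‖ ^ 2 + 2 * ⟪u, v⟫ ^ 2) := by
    have hint := integral_inner_add_pow_four_add_integral_inner_sub_pow_four h4 u v
    simp only [hc] at hint
    linear_combination -hint / 12 + c / 12 * norm_add_pow_four_add_norm_sub_pow_four u v
  let b := stdOrthonormalBasis ℝ E
  have htrace : ∫ x, ‖x‖ ^ 4 ∂μ = c / 3 * (finrank ℝ E * (finrank ℝ E + 2)) :=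
    calc ∫ x, ‖x‖ ^ 4 ∂μ = ∫ x, ∑ i, ∑ j, ⟪b i, x⟫ ^ 2 * ⟪b j, x⟫ ^ 2 ∂μ := by
          simp only [← Finset.sum_mul_sum, b.sum_sq_inner_right, ← pow_add]
      _ = ∑ i, ∑ j, ∫ x, ⟪b i, x⟫ ^ 2 * ⟪b j, x⟫ ^ 2 ∂μ := by
          have hint (i j) := integrable_inner_pow_mul_inner_pow (j := 2) (k := 2) h4 (b i) (b j)
          rw [integral_finsetSum _ fun i _ ↦ integrable_finsetSum _ fun j _ ↦ hint i j]
          exact Finset.sum_congr rfl fun i _ ↦ integral_finsetSum _ fun j _ ↦ hint i j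
      _ = c / 3 * ∑ i, ∑ j, (1 + 2 * ⟪b i, b j⟫ ^ 2) := by simp [hpolar, Finset.mul_sum]
      _ = c / 3 * (finrank ℝ E * (finrank ℝ E + 2)) := by
          congr 1
          simp [orthonormal_iff_ite.1 b.orthonormal, Finset.sum_add_distrib]
          ring
  rw [hpolar, htrace]
  ring

variable {ι : Type*} [Fintype ι]

theorem finrank_mul_integral_sum_inner_sq (hμ : IsRotationInvariant μ)
    (h2 : Integrable (fun x ↦ ‖x‖ ^ 2) μ) (w : ι → E) :
    finrank ℝ E * ∫ x, ∑ i, ⟪w i, x⟫ ^ 2 ∂μ = (∑ i, ‖w i‖ ^ 2) * ∫ x, ‖x‖ ^ 2 ∂μ := by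
  rw [integral_finsetSum _ fun i _ ↦ integrable_inner_pow h2 (w i), Finset.mul_sum,
    Finset.sum_mul]
  exact Finset.sum_congr rfl fun i _ ↦ hμ.finrank_mul_integral_inner_sq h2 (w i)

theorem finrank_mul_integral_sum_inner_sq_sq_le (hμ : IsRotationInvariant μ)
    (h4 : Integrable (fun x ↦ ‖x‖ ^ 4) μ) (w : ι → E) :
    finrank ℝ E * (finrank ℝ E + 2) * ∫ x, (∑ i, ⟪w i, x⟫ ^ 2) ^ 2 ∂μ ≤
      3 * (∑ i, ‖w i‖ ^ 2) ^ 2 * ∫ x, ‖x‖ ^ 4 ∂μ := by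
  have hint (i j) := integrable_inner_pow_mul_inner_pow (j := 2) (k := 2) h4 (w i) (w j)
  have hcs (i j) : ⟪w i, w j⟫ ^ 2 ≤ ‖w i‖ ^ 2 * ‖w j‖ ^ 2 := by
    rw [← mul_pow, sq_le_sq, abs_of_nonneg (by positivity : 0 ≤ ‖w i‖ * ‖w j‖)]
    exact abs_real_inner_le_norm _ _
  simp only [sq (Finset.sum _ _), Finset.sum_mul_sum]
  rw [integral_finsetSum _ fun i _ ↦ integrable_finsetSum _ fun j _ ↦ hint i j]
  simp only [integral_finsetSum _ fun j _ ↦ hint _ j, Finset.mul_sum, Finset.sum_mul,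
    hμ.finrank_mul_integral_inner_sq_mul_inner_sq h4]
  gcongr with i _ j _
  linarith [hcs i j]

end IsRotationInvariant

theorem IsRotationInvariant.one_sub_sqrt_mul_sum_norm_sq_le [FiniteDimensional ℝ E]
    [IsProbabilityMeasure μ] (hμ : IsRotationInvariant μ) (hone : ∀ᵐ x ∂μ, ‖x‖ = 1)
    {ι : Type*} [Fintype ι] (w : ι → E) {a : ℝ} (ha : 0 ≤ a) :
    (1 - √(3 * μ.real {x | a < ∑ i, ⟪w i, x⟫ ^ 2})) * ∑ i, ‖w i‖ ^ 2 ≤ finrank ℝ E * a := by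
  have hint := integrable_norm_pow_of_ae_norm_eq_one hone
  let Q : E → ℝ := fun x ↦ ∑ i, ⟪w i, x⟫ ^ 2
  set S := ∑ i, ‖w i‖ ^ 2
  set p := μ.real {x | a < Q x}
  set d : ℝ := (finrank ℝ E : ℝ)
  have hS : 0 ≤ S := Finset.sum_nonneg fun i _ ↦ sq_nonneg _
  have hd : 0 ≤ d := Nat.cast_nonneg _
  have hmean : d * ∫ x, Q x ∂μ = S := by
    simpa [integral_norm_pow_of_ae_norm_eq_one hone] using
      hμ.finrank_mul_integral_sum_inner_sq (hint 2) w
  have hsq : d * (d + 2) * ∫ x, Q x ^ 2 ∂μ ≤ 3 * S ^ 2 := by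
    simpa [integral_norm_pow_of_ae_norm_eq_one hone] using
      hμ.finrank_mul_integral_sum_inner_sq_sq_le (hint 4) w
  have hsd : d * √(∫ x, Q x ^ 2 ∂μ) ≤ √3 * S :=
    calc d * √(∫ x, Q x ^ 2 ∂μ) = √(d ^ 2 * ∫ x, Q x ^ 2 ∂μ) := by
          rw [Real.sqrt_mul (sq_nonneg d), Real.sqrt_sq hd]
      _ ≤ √(d * (d + 2) * ∫ x, Q x ^ 2 ∂μ) := by gcongr; nlinarith
      _ ≤ √(3 * S ^ 2) := Real.sqrt_le_sqrt hsq
      _ = √3 * S := by rw [Real.sqrt_mul zero_le_three, Real.sqrt_sq hS]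
  have hPZ : ∫ x, Q x ∂μ ≤ a + √(∫ x, Q x ^ 2 ∂μ) * √p :=
    paleyZygmund_integral_le (memLp_two_sum_inner_sq (hint 4) w) ha
  have : S ≤ d * a + √(3 * p) * S :=
    calc S = d * ∫ x, Q x ∂μ := hmean.symm
      _ ≤ d * (a + √(∫ x, Q x ^ 2 ∂μ) * √p) := by gcongr
      _ = d * a + d * √(∫ x, Q x ^ 2 ∂μ) * √p := by ring
      _ ≤ d * a + √3 * S * √p := by gcongr
      _ = d * a + √(3 * p) * S := by rw [Real.sqrt_mul zero_le_three]; ring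
  linarith

end RotationInvariance

section Sphere

variable {E : Type*} [NormedAddCommGroup E] [InnerProductSpace ℝ E] [MeasurableSpace E]
  [BorelSpace E]

theorem IsRotationInvariant.map_coe_toSphere {μ : Measure E} (hμ : IsRotationInvariant μ) :
    IsRotationInvariant (μ.toSphere.map Subtype.val) := by
  intro U
  have hU : Measurable U := U.continuous.measurable
  refine ⟨hU, Measure.ext fun s hs ↦ ?_⟩
  have hcone : Ioo (0 : ℝ) 1 • (Metric.sphere 0 1 ∩ U ⁻¹' s) =
      U ⁻¹' (Ioo (0 : ℝ) 1 • (Metric.sphere 0 1 ∩ s)) :=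
    calc Ioo (0 : ℝ) 1 • (Metric.sphere 0 1 ∩ U ⁻¹' s)
        = Ioo (0 : ℝ) 1 • (U.symm '' (Metric.sphere 0 1 ∩ s)) := by
          rw [U.symm.image_eq_preimage_symm, U.symm_symm, preimage_inter, U.preimage_sphere,
            map_zero]
      _ = U.symm '' (Ioo (0 : ℝ) 1 • (Metric.sphere 0 1 ∩ s)) :=
          (image_image2_distrib_right fun c x ↦ map_smul U.symm c x).symm
      _ = U ⁻¹' (Ioo (0 : ℝ) 1 • (Metric.sphere 0 1 ∩ s)) := U.symm.image_eq_preimage_symm _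
  rw [Measure.map_apply hU hs, Measure.map_apply measurable_subtype_coe (hU hs),
    Measure.map_apply measurable_subtype_coe hs,
    Measure.toSphere_apply' _ (measurable_subtype_coe (hU hs)),
    Measure.toSphere_apply' _ (measurable_subtype_coe hs),
    Subtype.image_preimage_coe, Subtype.image_preimage_coe, hcone,
    (hμ U).measure_preimage_emb U.toHomeomorph.measurableEmbedding]

theorem isRotationInvariant_volume [FiniteDimensional ℝ E] :
    IsRotationInvariant (volume : Measure E) :=
  fun U ↦ U.measurePreserving

end Sphere

section Matrix

variable {n : ℕ}

instance isProbabilityMeasure_sphereUniform [NeZero n] : IsProbabilityMeasure (sphereUniform n) :=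
  have : NeZero (volume : Measure (EuclideanSpace ℝ (Fin n))).toSphere :=
    ⟨Measure.toSphere_ne_zero _⟩
  isProbabilityMeasureSMul

theorem isRotationInvariant_map_coe_sphereUniform :
    IsRotationInvariant ((sphereUniform n).map Subtype.val) := by
  rw [sphereUniform, Measure.map_smul]
  exact isRotationInvariant_volume.map_coe_toSphere.smul _

theorem one_sub_sqrt_mul_frobenius_sq_le [NeZero n] {ι : Type*} [Fintype ι] (M : Matrix ι (Fin n) ℝ)
    {a : ℝ} (ha : 0 ≤ a) :
    (1 - √(3 * (1 - (sphereUniform n).real {r | ∑ i, (M.mulVec r.val.ofLp i) ^ 2 ≤ a}))) *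
      ∑ i, ∑ j, (M i j) ^ 2 ≤ n * a := by
  let row (i : ι) : EuclideanSpace ℝ (Fin n) := WithLp.toLp 2 (M i)
  have hrow (i) (x : EuclideanSpace ℝ (Fin n)) : ⟪row i, x⟫ = M.mulVec x.ofLp i := by
    simp [row, Matrix.mulVec, dotProduct, PiLp.inner_apply, mul_comm]
  have hprob : IsProbabilityMeasure ((sphereUniform n).map Subtype.val) :=
    Measure.isProbabilityMeasure_map measurable_subtype_coe.aemeasurable
  have hone : ∀ᵐ x ∂(sphereUniform n).map Subtype.val, ‖x‖ = 1 :=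
    (ae_map_iff measurable_subtype_coe.aemeasurable
      (measurableSet_eq_fun measurable_norm measurable_const)).2
      (ae_of_all _ norm_eq_of_mem_sphere)
  have hmeas : MeasurableSet {x : EuclideanSpace ℝ (Fin n) | ∑ i, ⟪row i, x⟫ ^ 2 ≤ a} :=
    measurableSet_le (Continuous.measurable (by fun_prop)) measurable_const
  have hcompl := probReal_compl_eq_one_sub (μ := (sphereUniform n).map Subtype.val) hmeas
  simp only [compl_ofPred, not_le] at hcompl
  have hmain :=
    isRotationInvariant_map_coe_sphereUniform.one_sub_sqrt_mul_sum_norm_sq_le hone row ha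
  rw [hcompl, map_measureReal_apply measurable_subtype_coe hmeas] at hmain
  simpa [hrow, row, EuclideanSpace.real_norm_sq_eq] using hmain

theorem frobenius_bound_of_random_vector_general {p : ℝ} (hp : 2 / 3 < p) :
    ∃ C : ℝ, 0 < C ∧
      ∀ (m n : ℕ) (M : Matrix (Fin m) (Fin n) ℝ) (a : ℝ), 0 ≤ a →
        ENNReal.ofReal p ≤
          sphereUniform n
            {r | ∑ i, (M.mulVec (WithLp.equiv 2 (Fin n → ℝ) r.val) i) ^ 2 ≤ a} →
        ∑ i, ∑ j, (M i j) ^ 2 ≤ C * n * a := by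
  have hsqrt : √(3 * (1 - p)) < 1 := by rw [Real.sqrt_lt' one_pos]; linarith
  have hpos : 0 < 1 - √(3 * (1 - p)) := sub_pos.2 hsqrt
  refine ⟨(1 - √(3 * (1 - p)))⁻¹, inv_pos.2 hpos, fun m n M a ha h ↦ ?_⟩
  obtain rfl | hn := eq_or_ne n 0
  · simp
  have : NeZero n := ⟨hn⟩
  rw [mul_assoc, le_inv_mul_iff₀ hpos]
  refine le_trans ?_ (one_sub_sqrt_mul_frobenius_sq_le M ha)
  gcongr
  exact (ENNReal.ofReal_le_iff_le_toReal (measure_ne_top _ _)).1 h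

end Matrix

/-- There is a universal constant `C` such that for every fixed
`M : ℝ^{n×n}` and `a ≥ 0`, if a uniformly random unit vector `r` satisfies
`Pr[‖Mr‖² ≤ a] ≥ 9/10`, then `‖M‖_F² ≤ C n a`. -/
theorem frobenius_bound_of_random_vector :
    ∃ C : ℝ, 0 < C ∧
      ∀ (n : ℕ) (M : Matrix (Fin n) (Fin n) ℝ) (a : ℝ), 0 ≤ a →
        (9 : ENNReal) / 10 ≤
          sphereUniform n
            {r | ∑ i, (M.mulVec (WithLp.equiv 2 (Fin n → ℝ) r.val) i) ^ 2 ≤ a} →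
        ∑ i, ∑ j, (M i j) ^ 2 ≤ C * n * a := by
  obtain ⟨C, hC, h⟩ := frobenius_bound_of_random_vector_general (p := 9 / 10) (by norm_num)
  exact ⟨C, hC, fun n M a ha hM ↦ h n n M a ha (by simpa [ENNReal.ofReal_div_of_pos] using hM)⟩
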